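/- Let 0 < σ < 1, let P be a real homogeneous polynomial of even degree 2k in n variables with P ≠ 0, let |ε| ≤ K(σ,P)⁻¹, and let μ be the probability measure on ℝⁿ with density f(·;ε,σ,P). Then for any unit vector a ∈ ℝⁿ, the pushforward of μ under x ↦ aᵀx has probability density g_a(x) = (2π)^{-1/2} [ e^{-x²/2} + (-1)^k ε P(a) σ^{-(2k+1)} H_{2k}(x/σ) e^{-x²/(2σ²)} ] on ℝ. -/

import Mathlib

open MeasureTheory Real ProbabilityTheory

noncomputable def hermiteR (m : ℕ) (x : ℝ) : ℝ :=
  Polynomial.aeval x (Polynomial.hermite m)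

noncomputable def renorm {n : ℕ} (P : MvPolynomial (Fin n) ℝ) (x : Fin n → ℝ) : ℝ :=
  ∑ m ∈ P.support, P.coeff m * ∏ i, hermiteR (m i) (x i)

noncomputable def Kconst (n k : ℕ) (σ : ℝ) (P : MvPolynomial (Fin n) ℝ) : ℝ :=
  ⨆ x : Fin n → ℝ, (σ ^ (n + 2*k))⁻¹ * |renorm P x| * Real.exp (-(1 - σ^2) * (∑ i, x i ^ 2) / 2)

noncomputable def fdens (n k : ℕ) (σ ε : ℝ) (P : MvPolynomial (Fin n) ℝ) (x : Fin n → ℝ) : ℝ :=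
  (2*π)^(-(n:ℝ)/2) * Real.exp (-(∑ i, x i ^ 2)/2) *
    (1 + (-1)^k * ε * (σ^(n+2*k))⁻¹ * renorm P (fun i => x i / σ) *
      Real.exp (-(1-σ^2) * (∑ i, x i ^ 2) / (2*σ^2)))

noncomputable def gdens (n k : ℕ) (σ ε : ℝ) (P : MvPolynomial (Fin n) ℝ) (a : Fin n → ℝ) (x : ℝ) : ℝ :=
  (2*π)^(-(1:ℝ)/2) * (Real.exp (-x^2/2) +
    (-1)^k * ε * MvPolynomial.eval a P * (σ^(2*k+1))⁻¹ * hermiteR (2*k) (x/σ) * Real.exp (-x^2/(2*σ^2)))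

theorem integral_exp_withDensity {E : Type*} [MeasurableSpace E] (ρ : Measure E) (f : E → ℝ)
    (hfm : Measurable f) (hf0 : ∀ x, 0 ≤ f x) (u : E → ℂ) :
    ∫ x, u x ∂(ρ.withDensity fun x => ENNReal.ofReal (f x)) = ∫ x, u x * (f x : ℂ) ∂ρ := by
  rw [integral_withDensity_eq_integral_toReal_smul (by fun_prop) (by simp)]
  refine integral_congr_ae (.of_forall fun x => ?_)
  simp only [ENNReal.toReal_ofReal (hf0 x), Complex.real_smul]
  ring

theorem integrable_cexp_mul {E : Type*} [MeasurableSpace E] (ρ : Measure E) (f : E → ℝ)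
    (hfi : Integrable f ρ) (L : E → ℝ) (hL : Measurable L) (t : ℝ) :
    Integrable (fun x => Complex.exp (t * (L x : ℂ) * Complex.I) * (f x : ℂ)) ρ := by
  refine Integrable.bdd_mul (c := 1) hfi.ofReal (by fun_prop) (.of_forall fun x => ?_)
  rw [← Complex.ofReal_mul, Complex.norm_exp_ofReal_mul_I]

theorem map_withDensity_of_fourier {E : Type*} [MeasurableSpace E] (ρ : Measure E) (f : E → ℝ)
    (hfm : Measurable f) (hfi : Integrable f ρ) (hf0 : ∀ x, 0 ≤ f x) (L : E → ℝ)
    (hL : Measurable L) (g : ℝ → ℝ) (hgm : Measurable g) (hgi : Integrable g)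
    (h : ∀ t : ℝ, ∫ x, Complex.exp (t * (L x : ℂ) * Complex.I) * (f x : ℂ) ∂ρ =
      ∫ y : ℝ, Complex.exp (t * (y : ℂ) * Complex.I) * (g y : ℂ)) :
    Measure.map L (ρ.withDensity fun x => ENNReal.ofReal (f x))
      = volume.withDensity (fun x => ENNReal.ofReal (g x)) := by
  have hneg : (volume.withDensity fun x => ENNReal.ofReal (-g x)) =
      volume.withDensity fun x => ENNReal.ofReal (max (-g x) 0) := by
    congr 1; ext x; simp
  have hpos : (volume.withDensity fun x => ENNReal.ofReal (g x)) =
      volume.withDensity fun x => ENNReal.ofReal (max (g x) 0) := by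
    congr 1; ext x; simp
  have hgp : Integrable (fun x => max (g x) 0) := hgi.pos_part
  have hgn : Integrable (fun x => max (-g x) 0) := hgi.neg_part
  have := isFiniteMeasure_withDensity_ofReal hfi.2
  have := isFiniteMeasure_withDensity_ofReal hgi.2
  have := isFiniteMeasure_withDensity_ofReal hgi.neg.2
  set ν := Measure.map L (ρ.withDensity fun x => ENNReal.ofReal (f x)) with hν
  have : IsFiniteMeasure (volume.withDensity fun x => ENNReal.ofReal (-g x)) :=
    isFiniteMeasure_withDensity_ofReal (f := fun x => - g x) hgi.neg.2
  have key : ν + (volume.withDensity fun x => ENNReal.ofReal (-g x)) =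
      volume.withDensity fun x => ENNReal.ofReal (g x) := by
    apply Measure.ext_of_charFun
    ext t
    have hbd : ∀ (m : Measure ℝ) [IsFiniteMeasure m],
        Integrable (fun x : ℝ => Complex.exp (t * (x : ℂ) * Complex.I)) m := by
      intro m _
      refine Integrable.of_bound (C := 1) (by fun_prop) (.of_forall fun x => ?_)
      rw [← Complex.ofReal_mul, Complex.norm_exp_ofReal_mul_I]
    rw [charFun_apply_real, charFun_apply_real, integral_add_measure (hbd _) (hbd _), hneg, hpos,
      integral_exp_withDensity _ _ (by fun_prop) (by simp),
      integral_exp_withDensity _ _ (by fun_prop) (by simp), hν,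
      integral_map hL.aemeasurable (by fun_prop),
      integral_exp_withDensity _ _ hfm hf0, h t,
      ← integral_add (integrable_cexp_mul _ _ hgi (fun x => x) measurable_id t)
        (integrable_cexp_mul _ _ hgn (fun x => x) measurable_id t)]
    refine integral_congr_ae (.of_forall fun x => ?_)
    have : g x + max (-g x) 0 = max (g x) 0 := by
      rcases le_total (g x) 0 with h | h
      · rw [max_eq_left (by linarith), max_eq_right h]; ring
      · rw [max_eq_right (by linarith), max_eq_left h]; ring
    beta_reduce
    rw [← mul_add, ← Complex.ofReal_add, this]
  have hz : (volume.withDensity fun x => ENNReal.ofReal (-g x)) = 0 := by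
    have hs : MeasurableSet {x | g x < 0} := measurableSet_lt hgm measurable_const
    have h1 : (volume.withDensity fun x => ENNReal.ofReal (g x)) {x | g x < 0} = 0 := by
      rw [withDensity_apply _ hs, setLIntegral_congr_fun hs (g := fun _ => 0)]
      · simp
      · intro x hx
        exact ENNReal.ofReal_of_nonpos (le_of_lt hx)
    have h2 : (volume.withDensity fun x => ENNReal.ofReal (-g x)) {x | g x < 0} = 0 := by
      rw [← key, Measure.add_apply] at h1
      exact (add_eq_zero.1 h1).2
    have h3 : (volume.withDensity fun x => ENNReal.ofReal (-g x)) {x | g x < 0}ᶜ = 0 := by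
      rw [withDensity_apply _ hs.compl, setLIntegral_congr_fun hs.compl (g := fun _ => 0)]
      · simp
      · intro x hx
        simp only [Set.mem_compl_iff, Set.mem_ofPred_eq, not_lt] at hx
        exact ENNReal.ofReal_of_nonpos (by linarith)
    rw [← Measure.measure_univ_eq_zero, ← Set.union_compl_self {x | g x < 0}]
    exact measure_union_null h2 h3
  rw [← key, hz, add_zero]

theorem integrable_poly_gauss (p : Polynomial ℝ) :
    Integrable (fun x : ℝ => p.eval x * Real.exp (-x ^ 2 / 2)) := by
  induction p using Polynomial.induction_on' with
  | add p q hp hq =>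
    simp only [Polynomial.eval_add, add_mul]
    exact hp.add hq
  | monomial m c =>
    have := (integrable_rpow_mul_exp_neg_mul_sq (b := 1 / 2) (by norm_num) (s := (m : ℝ))
      (by have : (0 : ℝ) ≤ m := by positivity
          linarith)).const_mul c
    refine this.congr (.of_forall fun x => ?_)
    simp only [Polynomial.eval_monomial, Real.rpow_natCast]
    rw [← mul_assoc]
    congr 2
    ring

theorem hermiteR_eq_eval (m : ℕ) (x : ℝ) :
    hermiteR m x = ((Polynomial.hermite m).map (Int.castRingHom ℝ)).eval x := by
  rw [hermiteR, Polynomial.aeval_def, Polynomial.eval_map]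
  rfl

theorem hermiteR_continuous (m : ℕ) : Continuous (hermiteR m) := by
  have : hermiteR m = fun x => ((Polynomial.hermite m).map (Int.castRingHom ℝ)).eval x :=
    funext (hermiteR_eq_eval m)
  rw [this]
  fun_prop

noncomputable def hg (m : ℕ) (σ x : ℝ) : ℝ :=
  hermiteR m (x / σ) * Real.exp (-(x / σ) ^ 2 / 2)

theorem hg_continuous (m : ℕ) (σ : ℝ) : Continuous (hg m σ) := by
  have := hermiteR_continuous m
  unfold hg
  fun_prop

theorem hg_integrable_one (m : ℕ) : Integrable (hg m 1) := by
  refine (integrable_poly_gauss ((Polynomial.hermite m).map (Int.castRingHom ℝ))).congr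
    (.of_forall fun x => ?_)
  simp [hg, hermiteR_eq_eval]

theorem hg_scale (m : ℕ) (σ x : ℝ) : hg m σ x = hg m 1 (x / σ) := by
  simp [hg]

theorem hg_integrable (m : ℕ) (σ : ℝ) (hσ : 0 < σ) : Integrable (hg m σ) := by
  have := (hg_integrable_one m).comp_div hσ.ne'
  refine this.congr (.of_forall fun x => ?_)
  simp [hg_scale m σ]

theorem hg_hasDerivAt (m : ℕ) (x : ℝ) : HasDerivAt (hg m 1) (-hg (m + 1) 1 x) x := by
  have h1 : HasDerivAt (fun x : ℝ => ((Polynomial.hermite m).map (Int.castRingHom ℝ)).eval x *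
      Real.exp (-x ^ 2 / 2)) _ x :=
    (Polynomial.hasDerivAt _ x).mul ((((hasDerivAt_id x).pow 2).neg.div_const 2).exp)
  have h2 : hg m 1 = (fun x : ℝ => ((Polynomial.hermite m).map (Int.castRingHom ℝ)).eval x *
      Real.exp (-x ^ 2 / 2)) := by
    ext x; simp [hg, hermiteR_eq_eval]
  rw [h2]
  convert h1 using 1
  simp [hg, hermiteR_eq_eval, Polynomial.hermite_succ, Polynomial.derivative_map]
  ring

theorem hg_fourier_one (m : ℕ) (t : ℝ) :
    ∫ x : ℝ, Complex.exp (t * (x : ℂ) * Complex.I) * (hg m 1 x : ℂ) =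
      (√(2 * π) : ℝ) * (Complex.I * t) ^ m * Complex.exp (-(t : ℂ) ^ 2 / 2) := by
  induction m with
  | zero =>
    have := fourierIntegral_gaussian (b := 1 / 2) (by norm_num) (t : ℂ)
    have e : ((π : ℂ) / (1 / 2)) ^ (1 / 2 : ℂ) = (√(2 * π) : ℝ) := by
      rw [Real.sqrt_eq_rpow, Complex.ofReal_cpow (by positivity)]
      push_cast
      congr 1
      ring
    rw [e] at this
    rw [pow_zero, mul_one]
    convert this using 1
    · refine integral_congr_ae (.of_forall fun x => ?_)
      simp only [hg, hermiteR, Polynomial.hermite_zero]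
      simp
      congr 2 <;> ring
    · congr 2; ring
  | succ m ih =>
    have hu : ∀ x : ℝ, HasDerivAt (fun x : ℝ => Complex.exp (t * (x : ℂ) * Complex.I))
        (t * Complex.I * Complex.exp (t * (x : ℂ) * Complex.I)) x := by
      intro x
      have := (((hasDerivAt_id x).ofReal_comp.const_mul (t : ℂ)).mul_const Complex.I).cexp
      refine this.congr_deriv ?_
      rw [Complex.ofReal_one, id]
      ring
    have hv : ∀ x : ℝ, HasDerivAt (fun x : ℝ => (hg m 1 x : ℂ))
        (-(hg (m + 1) 1 x : ℂ)) x := by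
      intro x
      have := (hg_hasDerivAt m x).ofReal_comp
      simpa using this
    have i0 := integrable_cexp_mul volume _ (hg_integrable_one m) _ measurable_id t
    have i1 := integrable_cexp_mul volume _ (hg_integrable_one (m + 1)) _ measurable_id t
    have := integral_mul_deriv_eq_deriv_mul_of_integrable (fun x _ => hu x) (fun x _ => hv x)
      (by refine i1.neg.congr (.of_forall fun x => ?_); simp)
      (by refine (i0.const_mul (t * Complex.I)).congr (.of_forall fun x => ?_); simp [mul_assoc])
      i0
    simp only [mul_neg, integral_neg, neg_inj, mul_assoc] at this
    simp only [mul_assoc] at ih ⊢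
    rw [this, integral_const_mul, integral_const_mul, ih]
    ring

theorem hg_fourier (m : ℕ) (σ : ℝ) (hσ : 0 < σ) (t : ℝ) :
    ∫ x : ℝ, Complex.exp (t * (x : ℂ) * Complex.I) * (hg m σ x : ℂ) =
      σ * (√(2 * π) : ℝ) * (Complex.I * σ * t) ^ m *
        Complex.exp (-(σ : ℂ) ^ 2 * (t : ℂ) ^ 2 / 2) := by
  have h1 := Measure.integral_comp_div
    (fun y : ℝ => Complex.exp ((σ * t : ℝ) * (y : ℂ) * Complex.I) * (hg m 1 y : ℂ)) σ
  rw [hg_fourier_one, abs_of_pos hσ, Complex.real_smul] at h1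
  have hσ' : (σ : ℂ) ≠ 0 := by exact_mod_cast hσ.ne'
  convert h1 using 1
  · refine integral_congr_ae (.of_forall fun x => ?_)
    simp only [hg_scale m σ x]
    push_cast
    congr 2
    field_simp
  · push_cast
    rw [show -((σ : ℂ) * t) ^ 2 / 2 = -(σ : ℂ) ^ 2 * (t : ℂ) ^ 2 / 2 by ring]
    ring

theorem hgprod_fourier {n : ℕ} (m : Fin n → ℕ) (σ : ℝ) (hσ : 0 < σ) (a : Fin n → ℝ)
    (ha : ∑ i, a i ^ 2 = 1) (t : ℝ) :
    ∫ x : Fin n → ℝ, Complex.exp (t * ((∑ i, a i * x i : ℝ) : ℂ) * Complex.I) *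
        ((∏ i, hg (m i) σ (x i) : ℝ) : ℂ) =
      (σ * (√(2 * π) : ℝ)) ^ n * (Complex.I * σ * t) ^ (∑ i, m i) * ((∏ i, a i ^ m i : ℝ) : ℂ) *
        Complex.exp (-(σ : ℂ) ^ 2 * (t : ℂ) ^ 2 / 2) := by
  have h1 := integral_fintype_prod_volume_eq_prod (𝕜 := ℂ) (E := fun _ : Fin n => ℝ)
    (fun i (y : ℝ) => Complex.exp ((t * a i : ℝ) * (y : ℂ) * Complex.I) * (hg (m i) σ y : ℂ))
  simp only [hg_fourier _ σ hσ] at h1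
  convert h1 using 1
  · refine integral_congr_ae (.of_forall fun x => ?_)
    simp only [Finset.prod_mul_distrib, ← Complex.exp_sum]
    push_cast
    congr 2
    rw [Finset.mul_sum, Finset.sum_mul]
    refine Finset.sum_congr rfl fun i _ => ?_
    ring
  · rw [Finset.prod_mul_distrib, Finset.prod_mul_distrib, ← Complex.exp_sum]
    have e1 : ∑ i, -(σ : ℂ) ^ 2 * ((t * a i : ℝ) : ℂ) ^ 2 / 2 = -(σ : ℂ) ^ 2 * (t : ℂ) ^ 2 / 2 := by
      have : ∑ i, (a i : ℂ) ^ 2 = 1 := by exact_mod_cast ha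
      calc _ = -(σ : ℂ) ^ 2 * (t : ℂ) ^ 2 / 2 * ∑ i, (a i : ℂ) ^ 2 := by
            rw [Finset.mul_sum]
            refine Finset.sum_congr rfl fun i _ => ?_
            push_cast
            ring
        _ = _ := by rw [this, mul_one]
    have e2 : ∏ i, (Complex.I * σ * ((t * a i : ℝ) : ℂ)) ^ m i =
        (Complex.I * σ * t) ^ (∑ i, m i) * ((∏ i, a i ^ m i : ℝ) : ℂ) := by
      push_cast
      rw [← Finset.prod_pow_eq_pow_sum, ← Finset.prod_mul_distrib]
      refine Finset.prod_congr rfl fun i _ => ?_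
      ring
    rw [e1, e2]
    simp
    ring

theorem hgprod_integrable {n : ℕ} (m : Fin n → ℕ) (σ : ℝ) (hσ : 0 < σ) :
    Integrable (fun x : Fin n → ℝ => ∏ i, hg (m i) σ (x i)) :=
  Integrable.fintype_prod (f := fun i => hg (m i) σ) fun i => hg_integrable (m i) σ hσ

theorem hgprod_eq {n : ℕ} (m : Fin n → ℕ) (σ : ℝ) (x : Fin n → ℝ) :
    ∏ i, hg (m i) σ (x i) =
      (∏ i, hermiteR (m i) (x i / σ)) * Real.exp (-(∑ i, x i ^ 2) / (2 * σ ^ 2)) := by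
  simp only [hg, Finset.prod_mul_distrib, ← Real.exp_sum]
  congr 2
  rw [← Finset.sum_neg_distrib, Finset.sum_div]
  refine Finset.sum_congr rfl fun i _ => ?_
  rw [div_pow, neg_div, neg_div, div_div, mul_comm]

theorem fdens_eq (n k : ℕ) (σ ε : ℝ) (hσ : 0 < σ) (P : MvPolynomial (Fin n) ℝ) :
    fdens n k σ ε P = fun x => (2 * π) ^ (-(n : ℝ) / 2) * ∏ i, hg 0 1 (x i) +
      ∑ m ∈ P.support, ((2 * π) ^ (-(n : ℝ) / 2) * ((-1) ^ k * ε * (σ ^ (n + 2 * k))⁻¹) *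
        P.coeff m) * ∏ i, hg (m i) σ (x i) := by
  ext x
  have h0 := hgprod_eq (fun _ => 0) 1 x
  simp only [hermiteR, Polynomial.hermite_zero] at h0
  simp only [one_pow, mul_one, map_one, Finset.prod_const_one, one_mul] at h0
  have e : Real.exp (-(∑ i, x i ^ 2) / (2 * σ ^ 2)) = Real.exp (-(∑ i, x i ^ 2) / 2) *
      Real.exp (-(1 - σ ^ 2) * (∑ i, x i ^ 2) / (2 * σ ^ 2)) := by
    rw [← Real.exp_add]
    congr 1
    field_simp
    ring
  rw [h0]
  simp only [hgprod_eq, e]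
  rw [fdens, renorm, mul_add, mul_one]
  congr 1
  rw [Finset.mul_sum, Finset.sum_mul, Finset.mul_sum]
  refine Finset.sum_congr rfl fun m _ => ?_
  ring

theorem gdens_eq (n k : ℕ) (σ ε : ℝ) (P : MvPolynomial (Fin n) ℝ) (a : Fin n → ℝ) :
    gdens n k σ ε P a = fun x => (2 * π) ^ (-(1 : ℝ) / 2) * hg 0 1 x +
      ((2 * π) ^ (-(1 : ℝ) / 2) * ((-1) ^ k * ε * MvPolynomial.eval a P * (σ ^ (2 * k + 1))⁻¹)) *
        hg (2 * k) σ x := by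
  ext x
  have e : -(x / σ) ^ 2 / 2 = -x ^ 2 / (2 * σ ^ 2) := by
    rw [div_pow, neg_div, neg_div, div_div, mul_comm]
  simp only [gdens, hg, e]
  simp [hermiteR]
  ring

theorem fdens_nonneg (n k : ℕ) (σ ε : ℝ) (hσ : 0 < σ) (P : MvPolynomial (Fin n) ℝ)
    (hε : |ε| ≤ (Kconst n k σ P)⁻¹) (x : Fin n → ℝ) : 0 ≤ fdens n k σ ε P x := by
  refine mul_nonneg (by positivity) ?_
  set y : Fin n → ℝ := fun i => x i / σ with hy
  have ee : -(1 - σ ^ 2) * (∑ i, x i ^ 2) / (2 * σ ^ 2) = -(1 - σ ^ 2) * (∑ i, y i ^ 2) / 2 := by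
    simp only [hy, div_pow, ← Finset.sum_div]
    field_simp
  rw [ee]
  set F : (Fin n → ℝ) → ℝ := fun x => (σ ^ (n + 2*k))⁻¹ * |renorm P x| *
    Real.exp (-(1 - σ^2) * (∑ i, x i ^ 2) / 2) with hF
  have hK : Kconst n k σ P = ⨆ x, F x := rfl
  have hF0 : ∀ x, 0 ≤ F x := fun x => by positivity
  have main : |ε| * F y ≤ 1 := by
    by_cases hb : BddAbove (Set.range F)
    · have h1 : F y ≤ Kconst n k σ P := le_ciSup hb y
      calc |ε| * F y ≤ (Kconst n k σ P)⁻¹ * Kconst n k σ P :=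
            mul_le_mul hε h1 (hF0 y) (le_trans (abs_nonneg _) hε)
        _ ≤ 1 := inv_mul_le_one
    · have : Kconst n k σ P = 0 := by rw [hK]; exact Real.iSup_of_not_bddAbove hb
      rw [this, inv_zero] at hε
      have : |ε| = 0 := le_antisymm hε (abs_nonneg _)
      rw [this]; simp
  have habs : |(-1) ^ k * ε * (σ ^ (n + 2 * k))⁻¹ * renorm P y *
      Real.exp (-(1 - σ ^ 2) * (∑ i, y i ^ 2) / 2)| = |ε| * F y := by
    simp only [hF, abs_mul, abs_pow, abs_neg, abs_one, one_pow, one_mul, abs_inv, Real.abs_exp,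
      abs_of_pos hσ]
    ring
  have := neg_abs_le ((-1) ^ k * ε * (σ ^ (n + 2 * k))⁻¹ * renorm P y *
      Real.exp (-(1 - σ ^ 2) * (∑ i, y i ^ 2) / 2))
  linarith

theorem two_pi_cancel (n : ℕ) : (2 * π) ^ (-(n : ℝ) / 2) * √(2 * π) ^ n = 1 := by
  rw [Real.sqrt_eq_rpow, ← Real.rpow_natCast, ← Real.rpow_mul (by positivity),
    ← Real.rpow_add (by positivity)]
  rw [show -(n : ℝ) / 2 + 1 / 2 * n = 0 by ring, Real.rpow_zero]

theorem stmt_5 (n k : ℕ) (σ : ℝ) (hσ0 : 0 < σ) (hσ1 : σ < 1)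
    (P : MvPolynomial (Fin n) ℝ) (hP : P.IsHomogeneous (2 * k)) (hP0 : P ≠ 0)
    (ε : ℝ) (hε : |ε| ≤ (Kconst n k σ P)⁻¹)
    (μ : Measure (Fin n → ℝ))
    (hμ : μ = volume.withDensity (fun x => ENNReal.ofReal (fdens n k σ ε P x)))
    (a : Fin n → ℝ) (ha : ∑ i, a i ^ 2 = 1) :
    Measure.map (fun x => ∑ i, a i * x i) μ
      = volume.withDensity (fun x => ENNReal.ofReal (gdens n k σ ε P a x)) := by
  subst hμ
  have hc := hg_continuous
  have hLm : Measurable (fun x : Fin n → ℝ => ∑ i, a i * x i) := by fun_prop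
  have hIntAll : ∀ m : Fin n →₀ ℕ, ∀ C : ℝ,
      Integrable (fun x : Fin n → ℝ => C * ∏ i, hg (m i) σ (x i)) :=
    fun m C => (hgprod_integrable (fun i => m i) σ hσ0).const_mul C
  have hIntZero : ∀ C : ℝ, Integrable (fun x : Fin n → ℝ => C * ∏ i, hg 0 1 (x i)) :=
    fun C => (hgprod_integrable (fun _ : Fin n => 0) 1 one_pos).const_mul C
  apply map_withDensity_of_fourier
  · rw [fdens_eq n k σ ε hσ0 P]
    exact Continuous.measurable (by fun_prop)
  · rw [fdens_eq n k σ ε hσ0 P]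
    exact (hIntZero _).add (integrable_finsetSum _ fun m _ => hIntAll m _)
  · exact fdens_nonneg n k σ ε hσ0 P hε
  · exact hLm
  · rw [gdens_eq]
    exact Continuous.measurable (by fun_prop)
  · rw [gdens_eq]
    exact ((hg_integrable 0 1 one_pos).const_mul _).add ((hg_integrable _ σ hσ0).const_mul _)
  intro t
  have L : ∫ x : Fin n → ℝ, Complex.exp (t * ((∑ i, a i * x i : ℝ) : ℂ) * Complex.I) *
      (fdens n k σ ε P x : ℂ) = Complex.exp (-(t : ℂ) ^ 2 / 2) +
      (-1) ^ k * ε * (MvPolynomial.eval a P : ℝ) * (Complex.I * t) ^ (2 * k) *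
        Complex.exp (-(σ : ℂ) ^ 2 * (t : ℂ) ^ 2 / 2) := by
    rw [fdens_eq n k σ ε hσ0 P]
    have hdeg : ∀ m ∈ P.support, ∑ i, m i = 2 * k := by
      intro m hm
      have := hP (MvPolynomial.mem_support_iff.1 hm)
      rw [← this, Finsupp.weight_apply, Finsupp.sum_fintype _ _ (by simp)]
      simp
    have e0 : ∀ x : Fin n → ℝ, Complex.exp (t * ((∑ i, a i * x i : ℝ) : ℂ) * Complex.I) *
        (((2 * π) ^ (-(n : ℝ) / 2) * ∏ i, hg 0 1 (x i) +
          ∑ m ∈ P.support, ((2 * π) ^ (-(n : ℝ) / 2) * ((-1) ^ k * ε * (σ ^ (n + 2 * k))⁻¹) *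
          P.coeff m) * ∏ i, hg (m i) σ (x i) : ℝ) : ℂ) =
        Complex.exp (t * ((∑ i, a i * x i : ℝ) : ℂ) * Complex.I) *
          (((2 * π) ^ (-(n : ℝ) / 2) * ∏ i, hg 0 1 (x i) : ℝ) : ℂ) +
        ∑ m ∈ P.support, Complex.exp (t * ((∑ i, a i * x i : ℝ) : ℂ) * Complex.I) *
          ((((2 * π) ^ (-(n : ℝ) / 2) * ((-1) ^ k * ε * (σ ^ (n + 2 * k))⁻¹) *
          P.coeff m) * ∏ i, hg (m i) σ (x i) : ℝ) : ℂ) := by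
      intro x
      generalize Complex.exp (t * ((∑ i, a i * x i : ℝ) : ℂ) * Complex.I) = u
      rw [Complex.ofReal_add, mul_add, Complex.ofReal_sum, Finset.mul_sum]
    simp only [e0]
    have pull : ∀ (C s : ℝ) (m : Fin n → ℕ), 0 < s →
        ∫ x : Fin n → ℝ, Complex.exp (t * ((∑ i, a i * x i : ℝ) : ℂ) * Complex.I) *
          ((C * ∏ i, hg (m i) s (x i) : ℝ) : ℂ) =
        C * ((s * (√(2 * π) : ℝ)) ^ n * (Complex.I * s * t) ^ (∑ i, m i) *
          ((∏ i, a i ^ m i : ℝ) : ℂ) * Complex.exp (-(s : ℂ) ^ 2 * (t : ℂ) ^ 2 / 2)) := by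
      intro C s m hs
      rw [← hgprod_fourier m s hs a ha t, ← integral_const_mul]
      refine integral_congr_ae (.of_forall fun x => ?_)
      simp only [Complex.ofReal_mul]
      ring
    rw [integral_add (integrable_cexp_mul _ _ (hIntZero _) _ hLm t)
        (integrable_finsetSum _ fun m _ => integrable_cexp_mul _ _ (hIntAll m _) _ hLm t),
      integral_finsetSum _ fun m _ => integrable_cexp_mul _ _ (hIntAll m _) _ hLm t,
      pull _ 1 (fun _ => 0) one_pos]
    have hpi : (((2 * π) ^ (-(n : ℝ) / 2) : ℝ) : ℂ) * ((√(2 * π) : ℝ) : ℂ) ^ n = 1 := by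
      exact_mod_cast two_pi_cancel n
    have hσ' : (σ : ℂ) ≠ 0 := by exact_mod_cast hσ0.ne'
    congr 1
    · simp only [Finset.sum_const_zero, pow_zero, Finset.prod_const_one, Complex.ofReal_one,
        one_pow, one_mul, mul_one]
      rw [← mul_assoc, hpi, one_mul]
      congr 1
      ring
    · rw [MvPolynomial.eval_eq', Complex.ofReal_sum, Finset.mul_sum, Finset.sum_mul, Finset.sum_mul]
      refine Finset.sum_congr rfl fun m hm => ?_
      rw [pull _ σ (fun i => m i) hσ0, hdeg m hm]
      have hs : ((σ : ℂ) ^ (n + 2 * k))⁻¹ * ((σ : ℂ) ^ n * (σ : ℂ) ^ (2 * k)) = 1 := by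
        rw [← pow_add]; exact inv_mul_cancel₀ (pow_ne_zero _ hσ')
      simp only [Complex.ofReal_mul, Complex.ofReal_inv, Complex.ofReal_pow, Complex.ofReal_neg,
        Complex.ofReal_one, mul_pow] at hpi ⊢
      set Q := (((2 * π) ^ (-(n : ℝ) / 2) : ℝ) : ℂ)
      set S := ((√(2 * π) : ℝ) : ℂ)
      set X := Complex.exp (-(σ : ℂ) ^ 2 * (t : ℂ) ^ 2 / 2)
      calc _ = (Q * S ^ n) * (((σ : ℂ) ^ (n + 2 * k))⁻¹ * ((σ : ℂ) ^ n * (σ : ℂ) ^ (2 * k))) *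
            ((-1) ^ k * ε * (P.coeff m * ((∏ i, a i ^ m i : ℝ) : ℂ)) *
              (Complex.I ^ (2 * k) * t ^ (2 * k)) * X) := by ring
        _ = _ := by rw [hpi, hs]; ring
  have R : ∫ y : ℝ, Complex.exp (t * (y : ℂ) * Complex.I) * (gdens n k σ ε P a y : ℂ) =
      Complex.exp (-(t : ℂ) ^ 2 / 2) +
      (-1) ^ k * ε * (MvPolynomial.eval a P : ℝ) * (Complex.I * t) ^ (2 * k) *
        Complex.exp (-(σ : ℂ) ^ 2 * (t : ℂ) ^ 2 / 2) := by
    rw [gdens_eq]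
    have pull : ∀ (C s : ℝ) (m : ℕ), 0 < s →
        ∫ y : ℝ, Complex.exp (t * (y : ℂ) * Complex.I) * ((C * hg m s y : ℝ) : ℂ) =
        C * (s * (√(2 * π) : ℝ) * (Complex.I * s * t) ^ m *
          Complex.exp (-(s : ℂ) ^ 2 * (t : ℂ) ^ 2 / 2)) := by
      intro C s m hs
      rw [← hg_fourier m s hs t, ← integral_const_mul]
      refine integral_congr_ae (.of_forall fun x => ?_)
      simp only [Complex.ofReal_mul]
      ring
    simp only [Complex.ofReal_add, mul_add]
    rw [integral_add
        (integrable_cexp_mul _ _ ((hg_integrable 0 1 one_pos).const_mul _) (fun x => x)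
          measurable_id t)
        (integrable_cexp_mul _ _ ((hg_integrable (2 * k) σ hσ0).const_mul _) (fun x => x)
          measurable_id t), pull _ 1 0 one_pos, pull _ σ (2 * k) hσ0]
    have hpi : (((2 * π) ^ (-(1 : ℝ) / 2) : ℝ) : ℂ) * ((√(2 * π) : ℝ) : ℂ) = 1 := by
      have := two_pi_cancel 1
      rw [pow_one, Nat.cast_one] at this
      exact_mod_cast this
    have hσ' : (σ : ℂ) ≠ 0 := by exact_mod_cast hσ0.ne'
    have hs : ((σ : ℂ) ^ (2 * k + 1))⁻¹ * ((σ : ℂ) * (σ : ℂ) ^ (2 * k)) = 1 := by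
      rw [← pow_succ']; exact inv_mul_cancel₀ (pow_ne_zero _ hσ')
    congr 1
    · simp only [pow_zero, Complex.ofReal_one, one_pow, one_mul, mul_one]
      rw [← mul_assoc, hpi, one_mul]
      congr 1
      ring
    · simp only [Complex.ofReal_mul, Complex.ofReal_inv, Complex.ofReal_pow, Complex.ofReal_neg,
        Complex.ofReal_one, mul_pow] at hpi ⊢
      set Q := (((2 * π) ^ (-(1 : ℝ) / 2) : ℝ) : ℂ)
      set S := ((√(2 * π) : ℝ) : ℂ)
      set X := Complex.exp (-(σ : ℂ) ^ 2 * (t : ℂ) ^ 2 / 2)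
      calc _ = (Q * S) * (((σ : ℂ) ^ (2 * k + 1))⁻¹ * ((σ : ℂ) * (σ : ℂ) ^ (2 * k))) *
            ((-1) ^ k * ε * (MvPolynomial.eval a P : ℝ) *
              (Complex.I ^ (2 * k) * t ^ (2 * k)) * X) := by ring
        _ = _ := by rw [hpi, hs]; ring
  rw [L, R]
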